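/- Under the hypotheses of the zero-temperature theorem, lim_{t→∞} h_{μ_t}(T) = lim_{t→∞} P(tΦ − tβ(Φ)), both limits existing, and this common value is ≥ sup{h_ν(T) : ν ∈ M_max(Φ)}. -/

import Mathlib

open MeasureTheory Filter Topology Set
open scoped ENNReal NNReal

/-- Positive part of an extended real, as an extended nonnegative real. -/
noncomputable def EReal.posPart (a : EReal) : ℝ≥0∞ :=
  if a = ⊤ then ⊤ else ENNReal.ofReal a.toReal

/-- `EReal`-valued logarithm of a real number: `elog r = -∞` for `r ≤ 0`. -/
noncomputable def elog (r : ℝ) : EReal := ENNReal.log (ENNReal.ofReal r)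

/-- The integral of an `EReal`-valued function, with values in `[-∞, ∞]`. -/
noncomputable def eint {X : Type*} [MeasurableSpace X] (μ : Measure X) (f : X → EReal) : EReal :=
  ((∫⁻ x, (f x).posPart ∂μ : ℝ≥0∞) : EReal) - ((∫⁻ x, (-f x).posPart ∂μ : ℝ≥0∞) : EReal)

/-- `Φ = {log φₙ}` is a subadditive potential for `T`: each `φₙ` is continuous,
nonnegative, and `φ_{n+m}(x) ≤ φₙ(x) · φₘ(Tⁿ x)`. -/
def SubadditivePotential {X : Type*} [TopologicalSpace X] (T : X → X) (φ : ℕ → X → ℝ) : Prop :=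
  (∀ n, 1 ≤ n → Continuous (φ n)) ∧ (∀ n x, 1 ≤ n → 0 ≤ φ n x) ∧
    (∀ m n : ℕ, 1 ≤ m → 1 ≤ n → ∀ x, φ (n + m) x ≤ φ n x * φ m (T^[n] x))



lemma emp_limit {X : Type*} [MetricSpace X] [CompactSpace X] [MeasurableSpace X] [BorelSpace X]
    (T : X → X) (hT : Continuous T) (x : ℕ → X) :
    ∃ μ : ProbabilityMeasure X, Measure.map T (μ : Measure X) = (μ : Measure X) ∧
      ∃ F : Filter ℕ, F.NeBot ∧ F ≤ atTop ∧ ∀ g : X → ℝ, Continuous g →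
        Tendsto (fun n : ℕ => (∑ m ∈ Finset.range (n + 1), g (T^[m] (x n))) / ((n : ℝ) + 1)) F
          (𝓝 (∫ y, g y ∂(μ : Measure X))) := by
  let ν0 : ℕ → Measure X := fun n =>
    ((n + 1 : ℕ) : ℝ≥0∞)⁻¹ • ∑ m ∈ Finset.range (n + 1), Measure.dirac (T^[m] (x n))
  have hν0 : ∀ n, IsProbabilityMeasure (ν0 n) := by
    intro n
    refine ⟨?_⟩
    simp only [ν0, Measure.smul_apply, Measure.coe_finsetSum, Finset.sum_apply, measure_univ,
      Finset.sum_const, Finset.card_range, smul_eq_mul, nsmul_eq_mul, mul_one]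
    exact ENNReal.inv_mul_cancel (by simp) (by simp)
  let ν : ℕ → ProbabilityMeasure X := fun n => ⟨ν0 n, hν0 n⟩
  have hint : ∀ n (g : X → ℝ), Continuous g → ∫ y, g y ∂(ν n : Measure X) =
      (∑ m ∈ Finset.range (n + 1), g (T^[m] (x n))) / ((n : ℝ) + 1) := by
    intro n g hg
    change ∫ y, g y ∂(ν0 n) = _
    simp only [ν0]
    rw [integral_smul_measure, integral_finsetSum_measure]
    · simp only [integral_dirac, ENNReal.toReal_inv, ENNReal.toReal_natCast, smul_eq_mul]
      push_cast
      rw [div_eq_inv_mul]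
    · intro i _
      exact integrable_dirac (by simp)
  let U : Ultrafilter ℕ := Ultrafilter.of atTop
  have hU : (U : Filter ℕ) ≤ atTop := Ultrafilter.of_le atTop
  obtain ⟨μ, -, hμ⟩ := isCompact_univ.ultrafilter_le_nhds (U.map ν) (by simp)
  have hlim : Tendsto ν U (𝓝 μ) := hμ
  rw [ProbabilityMeasure.tendsto_iff_forall_integral_tendsto] at hlim
  have hlim' : ∀ g : X → ℝ, Continuous g →
        Tendsto (fun n : ℕ => (∑ m ∈ Finset.range (n + 1), g (T^[m] (x n))) / ((n : ℝ) + 1)) U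
          (𝓝 (∫ y, g y ∂(μ : Measure X))) := by
    intro g hg
    have := hlim (BoundedContinuousFunction.mkOfCompact ⟨g, hg⟩)
    simpa [hint _ g hg] using this
  refine ⟨μ, ?_, U, inferInstance, hU, hlim'⟩
  have : IsProbabilityMeasure (Measure.map T (μ : Measure X)) :=
    Measure.isProbabilityMeasure_map hT.measurable.aemeasurable
  apply ext_of_forall_integral_eq_of_IsFiniteMeasure
  intro f
  rw [integral_map hT.measurable.aemeasurable f.continuous.aestronglyMeasurable]
  have h1 := (hlim' (fun y => f (T y)) (f.continuous.comp hT)).sub (hlim' f f.continuous)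
  have h2 : Tendsto (fun n : ℕ => (∑ m ∈ Finset.range (n + 1), f (T (T^[m] (x n)))) / ((n : ℝ) + 1)
      - (∑ m ∈ Finset.range (n + 1), f (T^[m] (x n))) / ((n : ℝ) + 1)) atTop (𝓝 0) := by
    have h3 : Tendsto (fun n : ℕ => (2 * ‖f‖) * (1 / ((n : ℝ) + 1))) atTop (𝓝 0) := by
      simpa using (tendsto_one_div_add_atTop_nhds_zero_nat (𝕜 := ℝ)).const_mul (2 * ‖f‖)
    refine squeeze_zero_norm (fun n => ?_) h3
    rw [← sub_div, ← Finset.sum_sub_distrib]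
    have e := Finset.sum_range_sub (fun m => f (T^[m] (x n))) (n + 1)
    simp only [Function.iterate_succ_apply'] at e
    rw [e, norm_div, mul_one_div]
    have hp : (0 : ℝ) < (n : ℝ) + 1 := by positivity
    rw [Real.norm_of_nonneg hp.le]
    gcongr
    calc _ ≤ ‖f (T (T^[n] (x n)))‖ + ‖f (T^[0] (x n))‖ := norm_sub_le _ _
      _ ≤ _ := by linarith [f.norm_coe_le_norm (T (T^[n] (x n))), f.norm_coe_le_norm (T^[0] (x n))]
  have h4 := tendsto_nhds_unique h1 (h2.mono_left hU)
  linarith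

lemma prod_bound {X : Type*} (T : X → X) (φ : ℕ → X → ℝ)
    (h0 : ∀ n x, 0 ≤ φ n x)
    (hs : ∀ m n x, φ (n + m) x ≤ φ n x * φ m (T^[n] x))
    (k : ℕ) (hk : 1 ≤ k) (C ε : ℝ) (hC : 0 ≤ C) (hε : 0 ≤ ε) (hCb : ∀ j ≤ k, ∀ x, φ j x ≤ C) (n : ℕ) (x : X) :
    ε ^ k * φ (n + k) x ^ k ≤
      C ^ (2 * k) * ∏ m ∈ Finset.range (n + k), max (φ k (T^[m] x)) ε := by
  set ψ : X → ℝ := fun y => max (φ k y) ε with hψ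
  have hψ0 : ∀ y, 0 ≤ ψ y := fun y => hε.trans (le_max_right _ _)
  have hA : ∀ n, ∏ j ∈ Finset.range k, φ (n + j) x ≤
      C ^ k * ∏ m ∈ Finset.range n, ψ (T^[m] x) := by
    intro n
    induction n with
    | zero =>
      simp only [zero_add, Finset.range_zero, Finset.prod_empty, mul_one]
      calc _ ≤ ∏ j ∈ Finset.range k, C :=
            Finset.prod_le_prod (fun i _ => h0 _ _)
              (fun i hi => hCb _ (Finset.mem_range.1 hi).le _)
        _ = _ := by simp
    | succ n ih =>
      rw [Finset.prod_range_succ, ← mul_assoc]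
      refine le_trans ?_ (mul_le_mul_of_nonneg_right ih (hψ0 _))
      cases k with
      | zero => omega
      | succ k =>
        rw [Finset.prod_range_succ, Finset.prod_range_succ' (fun j => φ (n + j) x), mul_assoc]
        have : ∀ j, n + 1 + j = n + (j + 1) := fun j => by ring
        simp only [this]
        refine mul_le_mul_of_nonneg_left ?_ (Finset.prod_nonneg fun i _ => h0 _ _)
        refine (hs (k + 1) n x).trans ?_
        exact mul_le_mul_of_nonneg_left (le_max_left _ _) (h0 _ _)
  have hB : φ (n + k) x ^ k ≤ (∏ j ∈ Finset.range k, φ (n + j) x) * C ^ k := by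
    calc φ (n + k) x ^ k = ∏ j ∈ Finset.range k, φ (n + k) x := by simp
      _ ≤ ∏ j ∈ Finset.range k, (φ (n + j) x * C) := by
        refine Finset.prod_le_prod (fun i _ => h0 _ _) fun j hj => ?_
        have hj' := (Finset.mem_range.1 hj).le
        have := hs (k - j) (n + j) x
        rw [show n + j + (k - j) = n + k by omega] at this
        exact this.trans (mul_le_mul_of_nonneg_left (hCb _ (by omega) _) (h0 _ _))
      _ = _ := by rw [Finset.prod_mul_distrib]; simp
  have hE : ε ^ k ≤ ∏ j ∈ Finset.range k, ψ (T^[n + j] x) := by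
    calc ε ^ k = ∏ j ∈ Finset.range k, ε := by simp
      _ ≤ _ := Finset.prod_le_prod (fun _ _ => hε) (fun _ _ => le_max_right _ _)
  have hP0 : 0 ≤ ∏ m ∈ Finset.range n, ψ (T^[m] x) := Finset.prod_nonneg fun i _ => hψ0 _
  calc ε ^ k * φ (n + k) x ^ k
      ≤ (∏ j ∈ Finset.range k, ψ (T^[n + j] x)) *
        ((C ^ k * ∏ m ∈ Finset.range n, ψ (T^[m] x)) * C ^ k) := by
        apply mul_le_mul hE _ (pow_nonneg (h0 _ _) _) ((pow_nonneg hε _).trans hE)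
        exact hB.trans (mul_le_mul_of_nonneg_right (hA n) (pow_nonneg hC _))
    _ = _ := by rw [Finset.prod_range_add]; ring

lemma EReal.posPart_real (r : ℝ) : (r : EReal).posPart = ENNReal.ofReal r := by
  simp [EReal.posPart]

lemma EReal.posPart_neg_real (r : ℝ) : (-(r : EReal)).posPart = ENNReal.ofReal (-r) := by
  rw [← EReal.coe_neg, EReal.posPart_real]

lemma EReal.posPart_sub (c : EReal) :
    ((c.posPart : ℝ≥0∞) : EReal) - (((-c).posPart : ℝ≥0∞) : EReal) = c := by
  induction c with
  | bot => simp [EReal.posPart]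
  | top => simp [EReal.posPart]
  | coe r =>
    rw [EReal.posPart_real, EReal.posPart_neg_real, EReal.coe_ennreal_ofReal,
      EReal.coe_ennreal_ofReal]
    norm_cast
    rcases le_total 0 r with h | h
    · rw [max_eq_left h, max_eq_right (by linarith)]; simp
    · rw [max_eq_right h, max_eq_left (by linarith)]; simp

lemma EReal.posPart_mono {a b : EReal} (h : a ≤ b) : a.posPart ≤ b.posPart := by
  induction b with
  | top => simp [EReal.posPart]
  | bot => rw [le_bot_iff.1 h]
  | coe r =>
    induction a with
    | top => simp at h
    | bot => simp [EReal.posPart]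
    | coe s =>
      simp only [EReal.posPart, EReal.coe_ne_top, if_false, EReal.toReal_coe]
      exact ENNReal.ofReal_le_ofReal (by exact_mod_cast h)

lemma eint_le_of_le {X : Type*} [MeasurableSpace X] (μ : Measure X) [IsProbabilityMeasure μ]
    (f : X → EReal) (c : EReal) (h : ∀ x, f x ≤ c) : eint μ f ≤ c := by
  conv_rhs => rw [← EReal.posPart_sub c]
  unfold eint
  apply EReal.sub_le_sub
  · rw [EReal.coe_ennreal_le_coe_ennreal_iff]
    calc _ ≤ ∫⁻ _, c.posPart ∂μ := lintegral_mono fun x => EReal.posPart_mono (h x)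
      _ = _ := by simp
  · rw [EReal.coe_ennreal_le_coe_ennreal_iff]
    calc (-c).posPart = ∫⁻ _, (-c).posPart ∂μ := by simp
      _ ≤ _ := lintegral_mono fun x => EReal.posPart_mono (EReal.neg_le_neg_iff.2 (h x))

/-- Lower bound on the extended integral of the logarithm through truncations. -/
lemma le_eint {X : Type*} [MetricSpace X] [CompactSpace X] [MeasurableSpace X] [BorelSpace X]
    (μ : Measure X) [IsProbabilityMeasure μ] (f : X → ℝ) (hf : Continuous f) (c : ℝ)
    (h : ∀ N : ℕ, c ≤ ∫ x, Real.log (max (f x) (Real.exp (-N))) ∂μ) :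
    (c : EReal) ≤ eint μ (fun x => elog (f x)) := by
  have hpos : ∀ N : ℕ, ∀ x, ENNReal.ofReal (Real.log (max (f x) (Real.exp (-N)))) =
      (elog (f x)).posPart := by
    intro N x
    unfold elog
    rw [ENNReal.log_ofReal]
    have hN : (0 : ℝ) ≤ N := N.cast_nonneg
    split_ifs with hx
    · rw [max_eq_right (hx.trans (Real.exp_pos _).le), Real.log_exp]
      simp [EReal.posPart, ENNReal.ofReal_of_nonpos]
    · push Not at hx
      simp only [EReal.posPart, EReal.coe_ne_top, if_false, EReal.toReal_coe]
      rcases le_total (f x) (Real.exp (-N)) with h' | h'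
      · rw [max_eq_right h', Real.log_exp, ENNReal.ofReal_of_nonpos (by linarith),
          ENNReal.ofReal_of_nonpos]
        have := Real.log_le_log hx h'
        rw [Real.log_exp] at this
        linarith
      · rw [max_eq_left h']
  have hneg : ∀ N : ℕ, ∀ x, ENNReal.ofReal (-Real.log (max (f x) (Real.exp (-N)))) =
      min (-elog (f x)).posPart (N : ℝ≥0∞) := by
    intro N x
    unfold elog
    rw [ENNReal.log_ofReal]
    have hN : (0 : ℝ) ≤ N := N.cast_nonneg
    split_ifs with hx
    · rw [max_eq_right (hx.trans (Real.exp_pos _).le), Real.log_exp]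
      simp [EReal.posPart]
    · push Not at hx
      rw [EReal.posPart_neg_real]
      rw [← ENNReal.ofReal_natCast N, ← ENNReal.ofReal_min]
      congr 1
      rcases le_total (f x) (Real.exp (-N)) with h' | h'
      · have := Real.log_le_log hx h'
        rw [Real.log_exp] at this
        rw [max_eq_right h', Real.log_exp, min_eq_right (by linarith)]
        simp
      · have := Real.log_le_log (Real.exp_pos _) h'
        rw [Real.log_exp] at this
        rw [max_eq_left h', min_eq_left (by linarith)]
  have hgc : ∀ N : ℕ, Continuous fun x => Real.log (max (f x) (Real.exp (-N))) := fun N =>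
    (hf.max continuous_const).log fun x => ((Real.exp_pos _).trans_le (le_max_right _ _)).ne'
  have hgi : ∀ N : ℕ, Integrable (fun x => Real.log (max (f x) (Real.exp (-N)))) μ := fun N =>
    (hgc N).integrable_of_hasCompactSupport (HasCompactSupport.of_compactSpace _)
  set A := ∫⁻ x, (elog (f x)).posPart ∂μ with hA
  set B := ∫⁻ x, (-elog (f x)).posPart ∂μ with hB
  have hAfin : A ≠ ⊤ := by
    have := (hgi 0).lintegral_lt_top.ne
    simp only [hpos] at this
    exact this
  have hBsup : B = ⨆ N : ℕ, ∫⁻ x, min (-elog (f x)).posPart (N : ℝ≥0∞) ∂μ := by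
    rw [← lintegral_iSup]
    · refine lintegral_congr fun x => ?_
      apply le_antisymm
      · by_cases ht : (-elog (f x)).posPart = ⊤
        · rw [ht]; simp [ENNReal.iSup_natCast]
        · obtain ⟨N, hN⟩ := ENNReal.exists_nat_gt ht
          exact le_iSup_of_le N (le_min le_rfl hN.le)
      · exact iSup_le fun N => min_le_left _ _
    · intro N
      have : Measurable fun x => ENNReal.ofReal (-Real.log (max (f x) (Real.exp (-N)))) :=
        (hgc N).neg.measurable.ennreal_ofReal
      simpa only [hneg] using this
    · intro a b hab x
      exact min_le_min_left _ (by exact_mod_cast hab)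
  have hBle : B ≤ ENNReal.ofReal (A.toReal - c) := by
    rw [hBsup]
    refine iSup_le fun N => ?_
    have h1 := h N
    rw [integral_eq_lintegral_pos_part_sub_lintegral_neg_part (hgi N)] at h1
    have h2 := (hgi N).neg.lintegral_lt_top.ne
    simp only [Pi.neg_apply, hneg] at h2
    simp only [hpos, hneg] at h1
    rw [← ENNReal.ofReal_toReal h2]
    exact ENNReal.ofReal_le_ofReal (by linarith)
  have hcA : c ≤ A.toReal := by
    have h1 := h 0
    rw [integral_eq_lintegral_pos_part_sub_lintegral_neg_part (hgi 0)] at h1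
    simp only [hpos] at h1
    have : 0 ≤ (∫⁻ a, ENNReal.ofReal (-Real.log (max (f a) (Real.exp (-(0:ℕ))))) ∂μ).toReal :=
      ENNReal.toReal_nonneg
    linarith
  unfold eint
  have e1 : (c : EReal) = (A : EReal) - (ENNReal.ofReal (A.toReal - c) : EReal) := by
    rw [EReal.coe_ennreal_ofReal, max_eq_left (by linarith)]
    have : (A : EReal) = ((A.toReal : ℝ) : EReal) := by
      conv_lhs => rw [← ENNReal.ofReal_toReal hAfin]
      rw [EReal.coe_ennreal_ofReal, max_eq_left ENNReal.toReal_nonneg]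
    rw [this, ← EReal.coe_sub]
    congr 1; ring
  rw [e1]
  exact EReal.sub_le_sub le_rfl (EReal.coe_ennreal_le_coe_ennreal_iff.2 hBle)

lemma exists_max_measure {X : Type*} [MetricSpace X] [CompactSpace X] [Nonempty X]
    [MeasurableSpace X] [BorelSpace X]
    (T : X → X) (hT : Continuous T)
    (φ : ℕ → X → ℝ) (hφ : SubadditivePotential T φ) (β : ℝ)
    (hβ : Tendsto (fun n : ℕ => elog (⨆ x, φ n x) / (n : EReal)) atTop (𝓝 (β : EReal))) :
    ∃ μ : ProbabilityMeasure X, Measure.map T (μ : Measure X) = (μ : Measure X) ∧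
      ∀ k : ℕ, 1 ≤ k →
        ((k * β : ℝ) : EReal) ≤ eint (μ : Measure X) (fun x => elog (φ k x)) := by
  obtain ⟨hc, h0, hs⟩ := hφ
  have hx : ∀ n : ℕ, ∃ x, ∀ y, φ (n + 1) y ≤ φ (n + 1) x := by
    intro n
    obtain ⟨x, -, hx⟩ := isCompact_univ.exists_isMaxOn univ_nonempty (hc (n + 1) (by omega)).continuousOn
    exact ⟨x, fun y => hx (mem_univ y)⟩
  choose x hx using hx
  have hsup : ∀ n : ℕ, ⨆ y, φ (n + 1) y = φ (n + 1) (x n) := fun n =>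
    le_antisymm (ciSup_le (hx n)) (le_ciSup (f := φ (n + 1)) ⟨_, by rintro _ ⟨y, rfl⟩; exact hx n y⟩ (x n))
  have hβ1 := hβ.comp (tendsto_add_atTop_nat 1)
  simp only [Function.comp_def, hsup] at hβ1
  have hpos : ∀ᶠ n : ℕ in atTop, 0 < φ (n + 1) (x n) := by
    filter_upwards [hβ1.eventually (lt_mem_nhds (EReal.bot_lt_coe β))] with n hn
    by_contra hcon
    push Not at hcon
    have : elog (φ (n + 1) (x n)) = ⊥ := by
      unfold elog; rw [ENNReal.log_ofReal, if_pos hcon]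
    rw [this, EReal.bot_div_of_pos_ne_top] at hn
    · exact lt_irrefl _ hn
    · exact_mod_cast Nat.succ_pos n
    · exact EReal.natCast_ne_top _
  have hβ2 : Tendsto (fun n : ℕ => Real.log (φ (n + 1) (x n)) / ((n : ℝ) + 1)) atTop (𝓝 β) := by
    rw [← EReal.tendsto_coe]
    refine hβ1.congr' ?_
    filter_upwards [hpos] with n hn
    unfold elog
    rw [ENNReal.log_ofReal_of_pos hn, EReal.coe_div]
    norm_cast
  obtain ⟨μ, hμ, F, hF, hFle, hlim⟩ := emp_limit T hT x
  refine ⟨μ, hμ, fun k hk => ?_⟩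
  apply le_eint _ _ (hc k hk)
  intro N
  let φ' : ℕ → X → ℝ := fun n y => if n = 0 then 1 else φ n y
  have hφ' : ∀ n, 1 ≤ n → φ' n = φ n := fun n hn => by
    ext y; simp [φ', show n ≠ 0 by omega]
  have h0' : ∀ n y, 0 ≤ φ' n y := by
    intro n y
    by_cases hn : n = 0
    · simp [φ', hn]
    · rw [hφ' n (by omega)]; exact h0 n y (by omega)
  have hs' : ∀ m n y, φ' (n + m) y ≤ φ' n y * φ' m (T^[n] y) := by
    intro m n y
    by_cases hn : n = 0
    · subst hn; simp [φ']
    by_cases hm : m = 0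
    · subst hm; simp [φ']
    rw [hφ' n (by omega), hφ' m (by omega), hφ' (n + m) (by omega)]
    exact hs m n (by omega) (by omega) y
  have hCe : ∀ K : ℕ, ∃ C : ℝ, 1 ≤ C ∧ ∀ j ≤ K, ∀ y, φ' j y ≤ C := by
    intro K
    induction K with
    | zero => exact ⟨1, le_rfl, fun j hj y => by simp [φ', Nat.le_zero.1 hj]⟩
    | succ K ih =>
      obtain ⟨C, hC1, hC⟩ := ih
      refine ⟨max C (φ (K + 1) (x K)), hC1.trans (le_max_left _ _), fun j hj y => ?_⟩
      rcases Nat.le_succ_iff.1 hj with h | h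
      · exact (hC j h y).trans (le_max_left _ _)
      · subst h
        rw [hφ' _ (by omega)]
        exact (hx K y).trans (le_max_right _ _)
  obtain ⟨C, hC1, hC⟩ := hCe k
  have hg : Continuous fun y => Real.log (max (φ k y) (Real.exp (-N))) :=
    ((hc k hk).max continuous_const).log
      fun y => ((Real.exp_pos _).trans_le (le_max_right _ _)).ne'
  have hl := hlim _ hg
  have hr : Tendsto (fun n : ℕ => (-(k * N : ℝ) - 2 * k * Real.log C) * (1 / ((n : ℝ) + 1)) +
      k * (Real.log (φ (n + 1) (x n)) / ((n : ℝ) + 1))) atTop (𝓝 (k * β)) := by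
    simpa using ((tendsto_one_div_add_atTop_nhds_zero_nat (𝕜 := ℝ)).const_mul
      (-(k * N : ℝ) - 2 * k * Real.log C)).add (hβ2.const_mul (k : ℝ))
  refine le_of_tendsto_of_tendsto (hr.mono_left hFle) hl ?_
  apply hFle
  filter_upwards [hpos, eventually_ge_atTop k] with n hn hnk
  have hb := prod_bound T φ' h0' hs' k hk C (Real.exp (-N)) (by linarith) (Real.exp_pos _).le hC
    (n + 1 - k) (x n)
  rw [show n + 1 - k + k = n + 1 by omega, hφ' (n + 1) (by omega), hφ' k hk] at hb
  have hψ : ∀ m ∈ Finset.range (n + 1), max (φ k (T^[m] (x n))) (Real.exp (-N)) ≠ 0 :=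
    fun m _ => ((Real.exp_pos _).trans_le (le_max_right _ _)).ne'
  have hlog := Real.log_le_log (by positivity) hb
  rw [Real.log_mul (by positivity) (by positivity),
    Real.log_mul (by positivity) (Finset.prod_ne_zero_iff.2 hψ), Real.log_prod hψ,
    Real.log_pow, Real.log_pow, Real.log_pow, Real.log_exp] at hlog
  push_cast at hlog
  have hp : (0 : ℝ) < (n : ℝ) + 1 := by positivity
  rw [mul_one_div, mul_div_assoc', ← add_div]
  gcongr
  linarith

/-- lim_{t→∞} h_{μ_t}(T) = lim_{t→∞} P(tΦ − tβ(Φ)) = lim (P(t) − tβ(Φ)),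
both limits existing, and the common value is ≥ sup{h_ν(T) : ν ∈ M_max(Φ)}. -/
theorem entropy_and_normalized_pressure_limits
    {X : Type*} [MetricSpace X] [CompactSpace X] [Nonempty X]
    [MeasurableSpace X] [BorelSpace X]
    (T : X → X) (hT : Continuous T)
    (φ : ℕ → X → ℝ) (hφ : SubadditivePotential T φ)
    -- metric entropies: nonnegative, bounded (finite topological entropy), and
    -- upper semi-continuous on the set of invariant measures
    (h : ProbabilityMeasure X → ℝ) (hh0 : ∀ μ, 0 ≤ h μ)
    (htop : ∃ H : ℝ, ∀ μ : ProbabilityMeasure X,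
      Measure.map T (μ : Measure X) = (μ : Measure X) → h μ ≤ H)
    (husc : UpperSemicontinuousOn h
      {μ : ProbabilityMeasure X | Measure.map T (μ : Measure X) = (μ : Measure X)})
    -- Lyapunov exponents of invariant measures
    (χ : ProbabilityMeasure X → EReal)
    (hχ : ∀ μ : ProbabilityMeasure X, Measure.map T (μ : Measure X) = (μ : Measure X) →
      Tendsto (fun n : ℕ => eint (μ : Measure X) (fun x => elog (φ n x)) / (n : EReal))
        atTop (𝓝 (χ μ)))
    -- β(Φ) > -∞ (and β(Φ) < ∞ always holds), so β(Φ) is a real number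
    (β : ℝ)
    (hβ : Tendsto (fun n : ℕ => elog (⨆ x, φ n x) / (n : EReal)) atTop (𝓝 (β : EReal)))
    -- the topological pressure, via the variational principle, and equilibrium states
    (P : ℝ → ℝ)
    (hP : ∀ t ∈ Set.Ioi (0 : ℝ), (P t : EReal) =
      sSup ((fun ν => (h ν : EReal) + (t : EReal) * χ ν) ''
        {ν : ProbabilityMeasure X | Measure.map T (ν : Measure X) = (ν : Measure X)}))
    (μt : ℝ → ProbabilityMeasure X)
    (hEq : ∀ t ∈ Set.Ioi (0 : ℝ),
      Measure.map T (μt t : Measure X) = (μt t : Measure X) ∧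
      (h (μt t) : EReal) + (t : EReal) * χ (μt t) = (P t : EReal))
    :
    ∃ L : ℝ,
      Tendsto (fun t => h (μt t)) atTop (𝓝 L) ∧
      Tendsto (fun t => P t - t * β) atTop (𝓝 L) ∧
      ∀ ν : ProbabilityMeasure X, Measure.map T (ν : Measure X) = (ν : Measure X) →
        χ ν = (β : EReal) → h ν ≤ L := by
  have hinv_le : ∀ ν : ProbabilityMeasure X, Measure.map T (ν : Measure X) = (ν : Measure X) →
      χ ν ≤ (β : EReal) := by
    intro ν hν
    refine le_of_tendsto_of_tendsto (hχ ν hν) hβ ?_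
    filter_upwards [eventually_ge_atTop 1] with n hn
    apply EReal.div_le_div_right_of_nonneg (by exact_mod_cast Nat.zero_le n)
    apply eint_le_of_le
    intro x
    unfold elog
    apply ENNReal.log_le_log
    apply ENNReal.ofReal_le_ofReal
    exact le_ciSup (f := φ n) (isCompact_range (hφ.1 n hn)).bddAbove x
  obtain ⟨μ, hμ, hμk⟩ := exists_max_measure T hT φ hφ β hβ
  have hμβ : χ μ = β := by
    apply le_antisymm (hinv_le μ hμ)
    refine ge_of_tendsto (hχ μ hμ) ?_
    filter_upwards [eventually_ge_atTop 1] with n hn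
    rw [EReal.le_div_iff_mul_le (by exact_mod_cast hn) (EReal.natCast_ne_top n)]
    have := hμk n hn
    rw [mul_comm]
    rw [EReal.coe_mul] at this
    exact_mod_cast this
  -- real exponents of the equilibrium states
  have hreal : ∀ t : ℝ, ∃ c : ℝ, 0 < t → χ (μt t) = c ∧ c ≤ β ∧ P t = h (μt t) + t * c := by
    intro t
    by_cases ht : 0 < t
    swap
    · exact ⟨0, fun h => absurd h ht⟩
    obtain ⟨h1, h2⟩ := hEq t ht
    have h3 := hinv_le _ h1
    induction hc : χ (μt t) with
    | bot =>
      rw [hc, EReal.coe_mul_bot_of_pos ht, EReal.add_bot] at h2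
      exact absurd h2 (EReal.bot_ne_coe _)
    | top =>
      rw [hc] at h3
      exact absurd h3 (by simp)
    | coe c =>
      rw [hc] at h2 h3
      refine ⟨c, fun _ => ⟨rfl, by exact_mod_cast h3, ?_⟩⟩
      exact_mod_cast h2.symm
  choose c hc using hreal
  have hvar : ∀ t, 0 < t → ∀ ν : ProbabilityMeasure X,
      Measure.map T (ν : Measure X) = (ν : Measure X) → ∀ r : ℝ, χ ν = r → h ν + t * r ≤ P t := by
    intro t ht ν hν r hr
    have : (h ν : EReal) + (t : EReal) * χ ν ≤ (P t : EReal) := by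
      rw [hP t ht]
      exact le_sSup ⟨ν, hν, rfl⟩
    rw [hr] at this
    exact_mod_cast this
  have hcmp : ∀ s t, 0 < s → 0 < t → h (μt t) + s * c t ≤ h (μt s) + s * c s := by
    intro s t hs ht
    rw [← (hc s hs).2.2]
    exact hvar s hs _ (hEq t ht).1 _ (hc t ht).1
  -- monotonicity
  have hmonoh : ∀ s t, 0 < s → s ≤ t → h (μt t) ≤ h (μt s) := by
    intro s t hs hst
    rcases hst.eq_or_lt with rfl | hlt
    · exact le_rfl
    have h1 := hcmp s t hs (hs.trans hlt)
    have h2 := hcmp t s (hs.trans hlt) hs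
    have h3 : c s ≤ c t := by
      by_contra hcon
      push Not at hcon
      nlinarith
    nlinarith
  have hmonoP : ∀ s t, 0 < s → s ≤ t → P t - t * β ≤ P s - s * β := by
    intro s t hs hst
    have ht := hs.trans_le hst
    have h1 := hcmp s t hs ht
    have h2 := (hc t ht).2
    have h3 := (hc s hs).2.2
    rw [h2.2, h3]
    nlinarith [mul_nonneg (sub_nonneg.2 hst) (sub_nonneg.2 h2.1)]
  have hlow : ∀ t, 0 < t → 0 ≤ P t - t * β := by
    intro t ht
    have := hvar t ht μ hμ β hμβ
    linarith [hh0 μ]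
  have key : ∀ f : ℝ → ℝ, (∀ s t, 0 < s → s ≤ t → f t ≤ f s) → (∀ t, 0 < t → 0 ≤ f t) →
      ∃ L, Tendsto f atTop (𝓝 L) := by
    intro f hf hf0
    have ha : Antitone fun t => f (max t 1) := fun s t hst =>
      hf _ _ (by positivity) (max_le_max_right 1 hst)
    have hb : BddBelow (range fun t => f (max t 1)) :=
      ⟨0, by rintro _ ⟨t, rfl⟩; exact hf0 _ (by positivity)⟩
    refine ⟨_, (tendsto_atTop_ciInf ha hb).congr' ?_⟩
    filter_upwards [eventually_ge_atTop 1] with t ht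
    rw [max_eq_left ht]
  obtain ⟨L, hL⟩ := key (fun t => P t - t * β) hmonoP hlow
  obtain ⟨L', hL'⟩ := key (fun t => h (μt t)) hmonoh (fun t _ => hh0 _)
  have hhalf : Tendsto (fun t : ℝ => t / 2) atTop atTop :=
    tendsto_id.atTop_div_const (by norm_num)
  have hLL : L' = L := by
    apply le_antisymm
    · -- gap controlled by the increment of the normalized pressure
      have h1 : Tendsto (fun t => (P t - t * β) +
          2 * ((P (t / 2) - t / 2 * β) - (P t - t * β))) atTop (𝓝 (L + 2 * (L - L))) :=
        hL.add (((hL.comp hhalf).sub hL).const_mul 2)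
      rw [sub_self, mul_zero, add_zero] at h1
      refine le_of_tendsto_of_tendsto hL' h1 ?_
      filter_upwards [eventually_gt_atTop 0] with t ht
      have h2 := hcmp (t / 2) t (by positivity) ht
      have h3 := (hc t ht).2.2
      have h4 := (hc (t / 2) (by positivity)).2.2
      linarith
    · refine le_of_tendsto_of_tendsto hL hL' ?_
      filter_upwards [eventually_gt_atTop 0] with t ht
      have h3 := (hc t ht).2
      change P t - t * β ≤ h (μt t)
      nlinarith [mul_nonneg ht.le (sub_nonneg.2 h3.1)]
  refine ⟨L, hLL ▸ hL', hL, fun ν hν hνβ => ?_⟩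
  refine ge_of_tendsto hL ?_
  filter_upwards [eventually_gt_atTop 0] with t ht
  have := hvar t ht ν hν β hνβ
  linarith
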